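/- (i) If M ∈ SU(2) (i.e., M is a 2×2 complex matrix with M·conj(M)ᵀ = 1 and det M = 1) and tr M = 2, then M = 1; if tr M = -2, then M = -1. (ii) Let U ⊆ ℂ be open, θ ∈ U, and suppose M, S : U → GL₂(ℂ) and μ : U → ℂ \ {0} are holomorphic with M(λ) = S(λ)·diag(μ(λ), μ(λ)⁻¹)·S(λ)⁻¹ for all λ ∈ U, and M(θ) = 1 or M(θ) = -1. Then M'(θ) = 0 if and only if μ'(θ) = 0. -/

import Mathlib

open Matrix

noncomputable section

abbrev M2 : Type := Matrix (Fin 2) (Fin 2) ℂ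

attribute [local instance] Matrix.linftyOpNormedRing Matrix.linftyOpNormedAlgebra

/-!
For unitary `M`, expanding shows `tr ((M - 1) (M - 1)ᴴ) = 2 (n - Re tr M)`, which vanishes when
`tr M = n`; hence `M = 1`.

If `M = S D S⁻¹` near `θ` and `D θ` is central, then `M x - M θ = S x (D x - D θ) (S x)⁻¹`, so
the difference quotients of `M` are conjugates of those of `D` and `M' θ = S θ (D' θ) (S θ)⁻¹`.
-/

open Filter Topology

section UnitaryTrace

variable {n R : Type*} [Fintype n] [DecidableEq n] [Ring R] [PartialOrder R] [StarRing R]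
  [StarOrderedRing R] [NoZeroDivisors R] {M : Matrix n n R}

theorem eq_one_of_mul_conjTranspose_self_of_trace_eq_card (hM : M * Mᴴ = 1)
    (htr : M.trace = Fintype.card n) : M = 1 := by
  have expand : (M - 1) * (M - 1)ᴴ = 1 - M - Mᴴ + 1 := by
    rw [conjTranspose_sub, conjTranspose_one, sub_mul, mul_sub, hM]
    noncomm_ring
  have trace_eq_zero : ((M - 1) * (M - 1)ᴴ).trace = 0 := by
    rw [expand]
    simp [trace_conjTranspose, htr]
  exact sub_eq_zero.mp (trace_mul_conjTranspose_self_eq_zero_iff.mp trace_eq_zero)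

theorem eq_neg_one_of_mul_conjTranspose_self_of_trace_eq_neg_card (hM : M * Mᴴ = 1)
    (htr : M.trace = -Fintype.card n) : M = -1 :=
  neg_eq_iff_eq_neg.mp <| eq_one_of_mul_conjTranspose_self_of_trace_eq_card
    (by simpa using hM) (by simp [htr])

end UnitaryTrace

section ConjugateMatrix

variable {n R : Type*} [Fintype n] [DecidableEq n] [CommRing R] {S : Matrix n n R}

theorem eq_of_conj_mem_center {D : Matrix n n R} (hS : IsUnit S)
    (hD : S * D * S⁻¹ ∈ Subring.center (Matrix n n R)) : S * D * S⁻¹ = D := by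
  refine hS.mul_left_cancel ?_
  rw [Subring.mem_center_iff.mp hD,
    nonsing_inv_mul_cancel_right _ _ ((isUnit_iff_isUnit_det S).mp hS)]

theorem conj_diagonal_eq_zero_iff (hS : IsUnit S) {d : n → R} :
    S * diagonal d * S⁻¹ = 0 ↔ d = 0 := by
  rw [(isUnit_nonsing_inv_iff.mpr hS).mul_left_eq_zero, hS.mul_right_eq_zero, diagonal_eq_zero]

end ConjugateMatrix

section MatrixInverse

variable {n K : Type*} [Fintype n] [DecidableEq n] [Field K] [TopologicalSpace K]
  [IsTopologicalRing K]

theorem continuousAt_matrix_inv_of_isUnit [ContinuousInv₀ K] {S : Matrix n n K} (hS : IsUnit S) :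
    ContinuousAt Inv.inv S := by
  refine continuousAt_matrix_inv S ?_
  rw [Ring.inverse_eq_inv']
  exact continuousAt_inv₀ ((isUnit_iff_isUnit_det S).mp hS).ne_zero

theorem eventually_mul_matrix_inv_eq_one [T1Space K] {X : Type*} [TopologicalSpace X]
    {S : X → Matrix n n K} {x₀ : X} (hS : ContinuousAt S x₀) (hSx₀ : IsUnit (S x₀)) :
    ∀ᶠ x in 𝓝 x₀, S x * (S x)⁻¹ = 1 := by
  have det_ne_zero : ∀ᶠ x in 𝓝 x₀, (S x).det ≠ 0 :=
    (continuous_id.matrix_det.continuousAt.comp hS).eventually_ne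
      ((isUnit_iff_isUnit_det _).mp hSx₀).ne_zero
  filter_upwards [det_ne_zero] with x hx using mul_nonsing_inv _ hx.isUnit

end MatrixInverse

section ConjugateDeriv

variable {𝕜 A : Type*} [NontriviallyNormedField 𝕜] [NormedRing A] [NormedAlgebra 𝕜 A]

theorem hasDerivAt_conj_of_mem_center {S D T : 𝕜 → A} {D' : A} {θ : 𝕜}
    (hS : ContinuousAt S θ) (hT : ContinuousAt T θ) (hST : ∀ᶠ x in 𝓝 θ, S x * T x = 1)
    (hD : HasDerivAt D D' θ) (hDθ : D θ ∈ Subring.center A) :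
    HasDerivAt (fun x ↦ S x * D x * T x) (S θ * D' * T θ) θ := by
  have conj_center {x : 𝕜} (hx : S x * T x = 1) : S x * D θ * T x = D θ := by
    rw [Subring.mem_center_iff.mp hDθ, mul_assoc, hx, mul_one]
  have slope_conj : ∀ᶠ x in 𝓝[≠] θ,
      S x * slope D θ x * T x = slope (fun x ↦ S x * D x * T x) θ x := by
    filter_upwards [hST.filter_mono nhdsWithin_le_nhds] with x hx
    rw [slope_def_module, slope_def_module, conj_center hST.self_of_nhds, mul_smul_comm,
      smul_mul_assoc, mul_sub, sub_mul, conj_center hx]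
  rw [hasDerivAt_iff_tendsto_slope] at hD ⊢
  exact (((hS.mono_left nhdsWithin_le_nhds).mul hD).mul
    (hT.mono_left nhdsWithin_le_nhds)).congr' slope_conj

end ConjugateDeriv

section DiagonalizableFamily

variable {n 𝕜 : Type*} [DecidableEq n] [NontriviallyNormedField 𝕜] {θ : 𝕜}

theorem hasDerivAt_matrix_diagonal [Finite n] {d : 𝕜 → n → 𝕜} {d' : n → 𝕜}
    (hd : HasDerivAt d d' θ) : HasDerivAt (fun x ↦ diagonal (d x)) (diagonal d') θ :=
  have := Fintype.ofFinite n
  let diagonalCLM : (n → 𝕜) →L[𝕜] Matrix n n 𝕜 :=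
    ⟨diagonalLinearMap n 𝕜 𝕜, continuous_id.matrix_diagonal⟩
  diagonalCLM.hasFDerivAt.comp_hasDerivAt θ hd

variable [Fintype n]

theorem hasDerivAt_of_eventuallyEq_conj_diagonal {M S : 𝕜 → Matrix n n 𝕜} {d : 𝕜 → n → 𝕜}
    {d' : n → 𝕜} (hS : ContinuousAt S θ) (hSθ : IsUnit (S θ)) (hd : HasDerivAt d d' θ)
    (hM : M =ᶠ[𝓝 θ] fun x ↦ S x * diagonal (d x) * (S x)⁻¹)
    (hMθ : M θ ∈ Subring.center (Matrix n n 𝕜)) :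
    HasDerivAt M (S θ * diagonal d' * (S θ)⁻¹) θ := by
  have diagonal_mem_center : diagonal (d θ) ∈ Subring.center (Matrix n n 𝕜) := by
    rw [hM.self_of_nhds] at hMθ
    exact eq_of_conj_mem_center hSθ hMθ ▸ hMθ
  have inv_continuousAt : ContinuousAt (fun x ↦ (S x)⁻¹) θ :=
    (continuousAt_matrix_inv_of_isUnit hSθ).comp hS
  exact (hasDerivAt_conj_of_mem_center hS inv_continuousAt
    (eventually_mul_matrix_inv_eq_one hS hSθ) (hasDerivAt_matrix_diagonal hd)
    diagonal_mem_center).congr_of_eventuallyEq hM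

theorem hasDerivAt_vec_self_inv {μ : 𝕜 → 𝕜} {μ' : 𝕜} (hμ : HasDerivAt μ μ' θ) (hμθ : μ θ ≠ 0) :
    HasDerivAt (fun x ↦ ![μ x, (μ x)⁻¹]) ![μ', -μ' / μ θ ^ 2] θ := by
  rw [hasDerivAt_pi, Fin.forall_fin_two]
  exact ⟨hμ, hμ.fun_inv hμθ⟩

end DiagonalizableFamily

open scoped ComplexOrder in
theorem closing_conditions_via_eigenvalue_general {n 𝕜 : Type*} [Fintype n] [DecidableEq n]
    [RCLike 𝕜] :
    (∀ M : Matrix n n 𝕜, M * Mᴴ = 1 →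
      (M.trace = Fintype.card n → M = 1) ∧ (M.trace = -Fintype.card n → M = -1)) ∧
    (∀ (θ : 𝕜) (M S : 𝕜 → Matrix n n 𝕜) (d : 𝕜 → n → 𝕜) (d' : n → 𝕜),
      ContinuousAt S θ → IsUnit (S θ) → HasDerivAt d d' θ →
      (M =ᶠ[𝓝 θ] fun x ↦ S x * diagonal (d x) * (S x)⁻¹) →
      M θ ∈ Subring.center (Matrix n n 𝕜) →
      (deriv M θ = 0 ↔ d' = 0)) := by
  refine ⟨fun M hM ↦ ⟨eq_one_of_mul_conjTranspose_self_of_trace_eq_card hM,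
    eq_neg_one_of_mul_conjTranspose_self_of_trace_eq_neg_card hM⟩, ?_⟩
  intro θ M S d d' hS hSθ hd hM hMθ
  have deriv_eq_conj : deriv M θ = S θ * diagonal d' * (S θ)⁻¹ :=
    (hasDerivAt_of_eventuallyEq_conj_diagonal hS hSθ hd hM hMθ).deriv
  rw [deriv_eq_conj, conj_diagonal_eq_zero_iff hSθ]

/-- (i) a matrix `M ∈ SU(2)` with `tr M = 2` (resp. `tr M = -2`) equals `1`
(resp. `-1`); (ii) if `M(λ) = S(λ)·diag(μ(λ), μ(λ)⁻¹)·S(λ)⁻¹` holomorphically on an open set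
`U ∋ θ`, with `S(λ)` invertible and `μ(λ) ≠ 0` on `U`, and `M(θ) = ±1`, then `M'(θ) = 0` iff
`μ'(θ) = 0`. -/
theorem closing_conditions_via_eigenvalue :
    (∀ M : M2, M * Mᴴ = 1 → M.det = 1 →
      (M.trace = 2 → M = 1) ∧ (M.trace = -2 → M = -1)) ∧
    (∀ (U : Set ℂ) (θ : ℂ), IsOpen U → θ ∈ U →
      ∀ (M S : ℂ → M2) (μ : ℂ → ℂ),
        DifferentiableOn ℂ M U → DifferentiableOn ℂ S U → DifferentiableOn ℂ μ U →
        (∀ lam ∈ U, IsUnit (S lam)) →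
        (∀ lam ∈ U, μ lam ≠ 0) →
        (∀ lam ∈ U, M lam = S lam * Matrix.diagonal ![μ lam, (μ lam)⁻¹] * (S lam)⁻¹) →
        (M θ = 1 ∨ M θ = -1) →
        (deriv M θ = 0 ↔ deriv μ θ = 0)) := by
  refine ⟨fun M hM _ ↦ by simpa using closing_conditions_via_eigenvalue_general.1 M hM, ?_⟩
  intro U θ hU hθ M S μ _ hS hμ hSu hμ0 hM hMθ
  have hUθ : U ∈ 𝓝 θ := hU.mem_nhds hθ
  have M_mem_center : M θ ∈ Subring.center M2 :=
    hMθ.elim (fun h ↦ h ▸ one_mem _) (fun h ↦ h ▸ neg_mem (one_mem _))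
  rw [closing_conditions_via_eigenvalue_general.2 θ M S _ _
    (hS.differentiableAt hUθ).continuousAt (hSu θ hθ)
    (hasDerivAt_vec_self_inv (hμ.differentiableAt hUθ).hasDerivAt (hμ0 θ hθ))
    (eventually_of_mem hUθ hM) M_mem_center]
  simp +contextual
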